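/- Let ν ≥ 1 and let N_ν ∈ M_ν(ℝ) be the nilpotent Jordan block with ones on the superdiagonal and zeros elsewhere. For every constant C ≥ 0 there exists a real skew-symmetric matrix F ∈ M_ν(ℝ) such that for all w = (w₁, …, w_ν) ∈ ℂ^ν: Re ⟨F N_ν w, w⟩ ≥ −|w₁|² + C (|w₂|² + ⋯ + |w_ν|²). -/

import Mathlib

open Matrix

noncomputable section

/-- The `ν × ν` nilpotent Jordan block, with ones on the superdiagonal. -/
def jordanBlock (ν : ℕ) : Matrix (Fin ν) (Fin ν) ℝ :=
  Matrix.of fun i j => if (j : ℕ) = (i : ℕ) + 1 then 1 else 0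

/-- Real matrix mapped to a complex matrix. -/
def cmap {ν : ℕ} (A : Matrix (Fin ν) (Fin ν) ℝ) : Matrix (Fin ν) (Fin ν) ℂ :=
  A.map (fun x => (x : ℂ))

/-- The coefficients. -/
def skA (C : ℝ) : ℕ → ℝ
  | 0 => 0
  | n + 1 => C + 1 + (skA C n) ^ 2

/-- The matrix. -/
def skF (ν : ℕ) (C : ℝ) : Matrix (Fin ν) (Fin ν) ℝ :=
  Matrix.of fun i k => (if (i : ℕ) = k + 1 then skA C i else 0) -
    (if (k : ℕ) = i + 1 then skA C k else 0)

/-- Extension by zero. -/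
def extz {ν : ℕ} (w : Fin ν → ℂ) (k : ℕ) : ℂ := if h : k < ν then w ⟨k, h⟩ else 0

lemma extz_fin {ν : ℕ} (w : Fin ν → ℂ) (k : Fin ν) : extz w k = w k := by
  simp [extz]

lemma sum_ite_ext {ν : ℕ} (m : ℕ) (f : ℕ → ℂ) (hf : ν ≤ m → f m = 0) :
    ∑ k : Fin ν, (if (k : ℕ) = m then f k else 0) = f m := by
  rw [Fin.sum_univ_eq_sum_range (fun k => if k = m then f k else 0) ν,
    Finset.sum_ite_eq' (Finset.range ν) m f]
  split_ifs with h
  · rfl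
  · exact (hf (by simpa using h)).symm

lemma N_mul {ν : ℕ} (w : Fin ν → ℂ) (k : Fin ν) :
    (cmap (jordanBlock ν) *ᵥ w) k = extz w (k + 1) := by
  have := sum_ite_ext (ν := ν) (k + 1) (extz w) (fun h => by simp [extz, h])
  rw [← this]
  simp only [Matrix.mulVec, dotProduct, cmap, jordanBlock, Matrix.map_apply, Matrix.of_apply]
  refine Finset.sum_congr rfl fun j _ => ?_
  rw [extz_fin]
  split_ifs <;> simp

lemma F_mul {ν : ℕ} (C : ℝ) (w : Fin ν → ℂ) (i : Fin ν) :
    (cmap (skF ν C * jordanBlock ν) *ᵥ w) i =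
      (skA C i : ℂ) * extz w i - (skA C (i + 1) : ℂ) * extz w (i + 2) := by
  have h0 : cmap (skF ν C * jordanBlock ν) = cmap (skF ν C) * cmap (jordanBlock ν) := by
    unfold cmap
    exact Matrix.map_mul (f := Complex.ofRealHom)
  rw [h0, ← Matrix.mulVec_mulVec]
  have h1 : (cmap (skF ν C) *ᵥ (cmap (jordanBlock ν) *ᵥ w)) i =
      ∑ k : Fin ν, (if (i : ℕ) = k + 1 then (skA C i : ℂ) * extz w (k + 1) else 0) -
      ∑ k : Fin ν, (if (k : ℕ) = i + 1 then (skA C k : ℂ) * extz w (k + 1) else 0) := by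
    rw [← Finset.sum_sub_distrib]
    change ∑ k : Fin ν, cmap (skF ν C) i k * (cmap (jordanBlock ν) *ᵥ w) k = _
    refine Finset.sum_congr rfl fun k _ => ?_
    rw [N_mul]
    simp only [cmap, skF, Matrix.map_apply, Matrix.of_apply]
    split_ifs <;> simp [sub_mul]
  rw [h1]
  congr 1
  · obtain ⟨i, hi⟩ := i
    rcases i with _ | m
    · simp [skA]
    · have := sum_ite_ext (ν := ν) m (fun k => (skA C (m + 1) : ℂ) * extz w (k + 1))
        (fun h => by omega)
      rw [← this]
      refine Finset.sum_congr rfl fun k _ => ?_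
      simp [eq_comm]
  · exact sum_ite_ext (ν := ν) (i + 1) (fun k => (skA C k : ℂ) * extz w (k + 1))
      (fun h => by simp [extz, show ν ≤ (i : ℕ) + 1 + 1 by omega])

lemma skew_skF (ν : ℕ) (C : ℝ) : (skF ν C)ᵀ = -skF ν C := by
  ext i j
  simp [skF]

lemma term_bound (a : ℝ) (b : ℝ) (x y : ℂ) :
    a * ‖x‖ ^ 2 - ‖x‖ ^ 2 - b ^ 2 * ‖y‖ ^ 2 ≤
      (x * (starRingEnd ℂ) ((a : ℂ) * x - (b : ℂ) * y)).re := by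
  rw [← Complex.normSq_eq_norm_sq, ← Complex.normSq_eq_norm_sq]
  simp only [Complex.normSq_apply, Complex.mul_re, Complex.conj_re, Complex.conj_im,
    Complex.sub_re, Complex.sub_im, Complex.mul_im, Complex.ofReal_re, Complex.ofReal_im]
  nlinarith [sq_nonneg (x.re - b * y.re / 2), sq_nonneg (x.im - b * y.im / 2),
    sq_nonneg (b * y.re), sq_nonneg (b * y.im)]

lemma shift_sum (ν : ℕ) (g : ℕ → ℝ) (h0 : ∀ k, 0 ≤ g k) (h1 : ∀ k, ν ≤ k → g k = 0) :
    ∑ k ∈ Finset.range ν, g (k + 2) ≤ ∑ k ∈ Finset.range ν, g k := by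
  have e1 := Finset.sum_range_succ g (ν + 1)
  have e2 := Finset.sum_range_succ g ν
  have e3 := Finset.sum_range_succ' g (ν + 1)
  have e4 := Finset.sum_range_succ' (fun k => g (k + 1)) ν
  have := h1 ν le_rfl
  have := h1 (ν + 1) (by omega)
  have := h0 0
  have := h0 (0 + 1)
  simp only [add_assoc] at *
  norm_num at *
  linarith

/-- The skew-symmetric part of a Kreiss symmetrizer: for every `C ≥ 0`
there is a real skew-symmetric `F` with
`Re ⟨F N_ν w, w⟩ ≥ −|w₁|² + C (|w₂|² + ⋯ + |w_ν|²)`. -/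
theorem exists_skew_symmetrizer (ν : ℕ) (hν : 0 < ν) (C : ℝ) (hC : 0 ≤ C) :
    ∃ F : Matrix (Fin ν) (Fin ν) ℝ, Fᵀ = -F ∧
      ∀ w : EuclideanSpace ℂ (Fin ν),
        -‖w ⟨0, hν⟩‖ ^ 2 + C * ∑ a ∈ Finset.univ.filter (fun a : Fin ν => (a : ℕ) ≠ 0), ‖w a‖ ^ 2 ≤
          (inner ℂ (Matrix.toEuclideanLin (cmap (F * jordanBlock ν)) w) w : ℂ).re := by
  refine ⟨skF ν C, skew_skF ν C, fun w => ?_⟩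
  have hin : (inner ℂ (Matrix.toEuclideanLin (cmap (skF ν C * jordanBlock ν)) w) w : ℂ).re =
      ∑ k ∈ Finset.range ν, (extz w k * (starRingEnd ℂ) ((skA C k : ℂ) * extz w k
        - (skA C (k + 1) : ℂ) * extz w (k + 2))).re := by
    rw [← Fin.sum_univ_eq_sum_range (fun k => (extz w k * (starRingEnd ℂ) ((skA C k : ℂ) * extz w k
        - (skA C (k + 1) : ℂ) * extz w (k + 2))).re) ν, PiLp.inner_apply, Complex.re_sum]
    refine Finset.sum_congr rfl fun k _ => ?_
    rw [← F_mul, extz_fin]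
    rfl
  rw [hin]
  have hs := shift_sum ν (fun k => skA C (k - 1) ^ 2 * ‖extz w k‖ ^ 2)
    (fun k => by positivity) (fun k hk => by simp [extz, hk])
  have hb := Finset.sum_le_sum (s := Finset.range ν) fun k _ =>
    term_bound (skA C k) (skA C (k + 1)) (extz w k) (extz w (k + 2))
  refine le_trans ?_ hb
  rw [Finset.sum_sub_distrib]
  refine le_trans ?_ (sub_le_sub_left hs _)
  rw [← Finset.sum_sub_distrib]
  have hl : -‖w ⟨0, hν⟩‖ ^ 2 + C * ∑ a ∈ Finset.univ.filter (fun a : Fin ν => (a : ℕ) ≠ 0),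
      ‖w a‖ ^ 2 = ∑ k ∈ Finset.range ν,
        (if k = 0 then -‖extz w k‖ ^ 2 else C * ‖extz w k‖ ^ 2) := by
    obtain ⟨n, rfl⟩ : ∃ n, ν = n + 1 := ⟨ν - 1, by omega⟩
    rw [← Fin.sum_univ_eq_sum_range
      (fun k => if k = 0 then -‖extz w k‖ ^ 2 else C * ‖extz w k‖ ^ 2) (n + 1),
      Finset.sum_filter, Fin.sum_univ_succ, Fin.sum_univ_succ, mul_add, Finset.mul_sum]
    simp only [extz_fin]
    simp
  rw [hl]
  refine Finset.sum_le_sum fun k _ => ?_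
  rcases k with _ | k
  · simp [skA]
  · simp only [Nat.add_sub_cancel, skA]
    rw [if_neg (by omega)]
    apply le_of_eq
    ring


end
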